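/- The Berwald–Moor metric tensor gᵢⱼ(y) (with gᵢᵢ = −(1/8)L/(yⁱ)², gᵢⱼ = (1/8)L/(yⁱyʲ), L = sgn(y⁰y¹y²y³)√|y⁰y¹y²y³|) has vanishing Cartan covector: Cᵢ(y) = (1/2)g^{jk}(y)∂gⱼₖ/∂yⁱ(y) = 0 for all y ∈ A = {y : yʲ ≠ 0 ∀j} and all i, yet gᵢⱼ is not independent of y (the metric is non-Riemannian). -/

import Mathlib

/-!
On `A = {y : yʲ ≠ 0 ∀ j}` the metric factors as `gⱼₖ = (1/8) hⱼₖ L / (yʲ yᵏ)`, where `h` is the constant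
matrix with `-1` on the diagonal and `1` off it. As `h² = 4`, the inverse metric is
`gʲᵏ = 2 hⱼₖ yʲ yᵏ / L` (`inv_gBM`). The function `L` is a signed square root of `y⁰y¹y²y³`, so
`∂L/∂yⁱ = L / (2 yⁱ)` (`hasFDerivAt_LBM`), and therefore
`∂gⱼₖ/∂yⁱ = gⱼₖ (1/2 - δᵢⱼ - δᵢₖ) / yⁱ` (`pderiv_gBM`). Since `hⱼₖ² = 1`, contracting gives
`(1/4) ∑ⱼₖ (1/2 - δᵢⱼ - δᵢₖ) / yⁱ = (1/4) (8 - 4 - 4) / yⁱ = 0`.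
That `g` is not constant is seen by comparing `(1,1,1,1)` with `(-1,1,1,1)`, where `L` has opposite signs.
-/

noncomputable def pderiv' {n : ℕ} (i : Fin n) (f : (Fin n → ℝ) → ℝ)
    (y : Fin n → ℝ) : ℝ :=
  fderiv ℝ f y (Pi.single i 1)

/-- The Berwald–Moor function L(y) = sgn(y⁰y¹y²y³)·√|y⁰y¹y²y³|. -/
noncomputable def LBM (y : Fin 4 → ℝ) : ℝ :=
  Real.sign (y 0 * y 1 * y 2 * y 3) * Real.sqrt |y 0 * y 1 * y 2 * y 3|

/-- The Berwald–Moor metric tensor. -/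
noncomputable def gBM (y : Fin 4 → ℝ) : Matrix (Fin 4) (Fin 4) ℝ :=
  Matrix.of fun i j =>
    if i = j then -(1 / 8) * LBM y / (y i) ^ 2
    else (1 / 8) * LBM y / (y i * y j)

/-- The constant matrix `hⱼₖ` with entries `-1` on the diagonal and `1` off it. -/
def signBM (j k : Fin 4) : ℝ := if j = k then -1 else 1

theorem gBM_apply (y : Fin 4 → ℝ) (j k : Fin 4) :
    gBM y j k = signBM j k / 8 * (LBM y * ((y j)⁻¹ * (y k)⁻¹)) := by
  unfold gBM signBM
  simp only [Matrix.of_apply]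
  split_ifs with h
  · subst h
    rw [div_eq_mul_inv _ (y j ^ 2), sq, mul_inv]; ring
  · rw [div_eq_mul_inv _ (y j * y k), mul_inv]; ring

theorem hasDerivAt_sign_mul_sqrt_abs {p : ℝ} (hp : p ≠ 0) :
    HasDerivAt (fun s : ℝ => Real.sign s * √|s|) (Real.sign p * √|p| / (2 * p)) p := by
  rcases lt_or_gt_of_ne hp with h | h
  · have h1 : HasDerivAt (fun s : ℝ => -√(-s)) (-(-1 / (2 * √(-p)))) p :=
      ((hasDerivAt_id p).neg.sqrt (neg_ne_zero.2 hp)).neg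
    have h2 : (fun s : ℝ => Real.sign s * √|s|) =ᶠ[nhds p] fun s => -√(-s) := by
      filter_upwards [eventually_lt_nhds h] with s hs
      rw [Real.sign_of_neg hs, abs_of_neg hs]; ring
    refine (h1.congr_of_eventuallyEq h2).congr_deriv ?_
    rw [Real.sign_of_neg h, abs_of_neg h]
    have h3 : √(-p) ≠ 0 := (Real.sqrt_pos.2 (by linarith)).ne'
    field_simp
    rw [Real.sq_sqrt (by linarith)]; ring
  · have h1 : HasDerivAt (fun s : ℝ => √s) (1 / (2 * √p)) p := (hasDerivAt_id p).sqrt hp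
    have h2 : (fun s : ℝ => Real.sign s * √|s|) =ᶠ[nhds p] fun s => √s := by
      filter_upwards [eventually_gt_nhds h] with s hs
      rw [Real.sign_of_pos hs, abs_of_pos hs]; ring
    refine (h1.congr_of_eventuallyEq h2).congr_deriv ?_
    rw [Real.sign_of_pos h, abs_of_pos h]
    have h3 : √p ≠ 0 := (Real.sqrt_pos.2 h).ne'
    field_simp
    rw [Real.sq_sqrt h.le]

theorem hasFDerivAt_coord (y : Fin 4 → ℝ) (j : Fin 4) :
    HasFDerivAt (fun z : Fin 4 → ℝ => z j) (ContinuousLinearMap.proj (R := ℝ) j) y :=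
  (ContinuousLinearMap.proj (R := ℝ) (φ := fun _ : Fin 4 => ℝ) j).hasFDerivAt

/-- `L` is differentiable on `A`, with `∂L/∂yⁱ = L / (2 yⁱ)`. -/
theorem hasFDerivAt_LBM {y : Fin 4 → ℝ} (hy : ∀ j, y j ≠ 0) :
    ∃ L' : (Fin 4 → ℝ) →L[ℝ] ℝ, HasFDerivAt LBM L' y ∧
      ∀ i, L' (Pi.single i 1) = LBM y / (2 * y i) := by
  have hp : y 0 * y 1 * y 2 * y 3 ≠ 0 := by simp [hy]
  have hP : HasFDerivAt (fun z : Fin 4 → ℝ => z 0 * z 1 * z 2 * z 3) _ y := (((hasFDerivAt_coord y 0).mul (hasFDerivAt_coord y 1)).mul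
    (hasFDerivAt_coord y 2)).mul (hasFDerivAt_coord y 3)
  have hL := HasDerivAt.comp_hasFDerivAt (f := fun z : Fin 4 → ℝ => z 0 * z 1 * z 2 * z 3) y
    (hasDerivAt_sign_mul_sqrt_abs hp) hP
  refine ⟨_, hL, fun i => ?_⟩
  change _ = (Real.sign (y 0 * y 1 * y 2 * y 3) * √|y 0 * y 1 * y 2 * y 3|) / (2 * y i)
  generalize Real.sign (y 0 * y 1 * y 2 * y 3) * √|y 0 * y 1 * y 2 * y 3| = c
  have h0 := hy 0
  have h1 := hy 1
  have h2 := hy 2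
  have h3 := hy 3
  fin_cases i <;> simp <;> field_simp

theorem LBM_ne_zero {y : Fin 4 → ℝ} (hy : ∀ j, y j ≠ 0) : LBM y ≠ 0 := by
  have hp : y 0 * y 1 * y 2 * y 3 ≠ 0 := by simp [hy]
  exact mul_ne_zero (by rwa [Ne, Real.sign_eq_zero_iff])
    (Real.sqrt_pos.2 (abs_pos.2 hp)).ne'

/-- Logarithmic differentiation of `gⱼₖ = (1/8) hⱼₖ L / (yʲ yᵏ)`. -/
theorem pderiv_gBM {y : Fin 4 → ℝ} (hy : ∀ j, y j ≠ 0) (i j k : Fin 4) :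
    pderiv' i (fun z => gBM z j k) y =
      gBM y j k * ((1 / 2 - (if i = j then 1 else 0) - (if i = k then 1 else 0)) / y i) := by
  obtain ⟨L', hL, hL'⟩ := hasFDerivAt_LBM hy
  have hinv (j : Fin 4) := (hasDerivAt_inv (hy j)).comp_hasFDerivAt y (hasFDerivAt_coord y j)
  have hg : HasFDerivAt (fun z => signBM j k / 8 * (LBM z * ((z j)⁻¹ * (z k)⁻¹))) _ y :=
    (hL.mul ((hinv j).mul (hinv k))).const_mul (signBM j k / 8)
  have hfun : (fun z => gBM z j k) =
      fun z => signBM j k / 8 * (LBM z * ((z j)⁻¹ * (z k)⁻¹)) :=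
    funext fun z => gBM_apply z j k
  unfold pderiv'
  rw [hfun, gBM_apply, HasFDerivAt.fderiv hg]
  have hi := hy i
  have hj := hy j
  have hk := hy k
  simp only [smul_apply, add_apply, hL',
    ContinuousLinearMap.proj_apply, Pi.single_apply, smul_eq_mul, Function.comp_apply,
    Pi.mul_apply, eq_comm (a := j) (b := i), eq_comm (a := k) (b := i)]
  split_ifs with h1 h2 h2
  · subst h1 h2; field_simp; ring
  · subst h1; field_simp; ring
  · subst h2; field_simp; ring
  · field_simp; ring

theorem inv_gBM {y : Fin 4 → ℝ} (hy : ∀ j, y j ≠ 0) :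
    (gBM y)⁻¹ = Matrix.of fun j k => 2 * signBM j k * (y j * y k) / LBM y := by
  apply Matrix.inv_eq_right_inv
  have hL := LBM_ne_zero hy
  have h0 := hy 0
  have h1 := hy 1
  have h2 := hy 2
  have h3 := hy 3
  ext j k
  simp only [Matrix.mul_apply, gBM_apply, Matrix.of_apply, Fin.sum_univ_four]
  fin_cases j <;> fin_cases k <;> simp [signBM] <;> field_simp <;> norm_num

/-- The Berwald–Moor metric has identically vanishing Cartan covector on
A = {y : yⁱ ≠ 0 ∀i}, yet it is not independent of y (it is non-Riemannian):
a counterexample to Deicke's theorem in Lorentzian signature. -/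
theorem stmt_11 :
    (∀ y : Fin 4 → ℝ, (∀ j, y j ≠ 0) → ∀ i : Fin 4,
      (1 / 2) * ∑ j, ∑ k, (gBM y)⁻¹ j k * pderiv' i (fun z => gBM z j k) y = 0) ∧
    ¬ (∀ y y' : Fin 4 → ℝ, (∀ j, y j ≠ 0) → (∀ j, y' j ≠ 0) → gBM y = gBM y') := by
  constructor
  · intro y hy i
    have key (j k : Fin 4) : (gBM y)⁻¹ j k * pderiv' i (fun z => gBM z j k) y =
        1 / 4 * ((1 / 2 - (if i = j then 1 else 0) - (if i = k then 1 else 0)) / y i) := by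
      have hs : signBM j k * signBM j k = 1 := by unfold signBM; split_ifs <;> norm_num
      have hg : (gBM y)⁻¹ j k * gBM y j k = 1 / 4 := by
        rw [inv_gBM hy, gBM_apply, Matrix.of_apply]
        have hL := LBM_ne_zero hy
        have hj := hy j
        have hk := hy k
        field_simp
        linear_combination 8 * hs
      rw [pderiv_gBM hy, ← mul_assoc, hg]
    simp only [key, Fin.sum_univ_four]
    fin_cases i <;> simp <;> ring
  · intro h
    have h1 := h (fun _ => 1) ![-1, 1, 1, 1] (by simp)
      (by intro j; fin_cases j <;> simp)
    have h2 := congrFun (congrFun h1 0) 0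
    simp [gBM, LBM, Real.sign_neg] at h2
    norm_num at h2
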